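/- Fix sigma_1 > 0, sigma_2 > 0, sigma_W > 0 and c >= 0. Define sigmatilde_i^2(z) = sigma_i^2 * z / (sigma_W^2 / sigma_i^2 + z), s(z_1, z_2) = sqrt(sigmatilde_1^2(z_1) + sigmatilde_2^2(z_2)), and v(z_1, z_2) = s(z_1, z_2) * f(-c / s(z_1, z_2)), where f(a) = a*Phi(a) + phi(a) with Phi the standard normal cumulative distribution function and phi the standard normal density. Then for all z_1 > 0 and z_2 > 0, the mixed second partial derivative d^2 v / (dz_1 dz_2) at (z_1, z_2) is nonpositive if and only if c^2 <= sigmatilde_1^2(z_1) + sigmatilde_2^2(z_2). -/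

import Mathlib

/-- The standard normal density `φ(ζ) = exp(-ζ²/2)/√(2π)`. -/
noncomputable def stdGaussPDF (ζ : ℝ) : ℝ :=
  (1 / Real.sqrt (2 * Real.pi)) * Real.exp (-ζ ^ 2 / 2)

/-- The standard normal cumulative distribution function `Φ(ζ) = ∫_{-∞}^ζ φ`. -/
noncomputable def stdGaussCDF (ζ : ℝ) : ℝ := ∫ t in Set.Iic ζ, stdGaussPDF t

/-- `f(a) = a·Φ(a) + φ(a)`. -/
noncomputable def fKG (a : ℝ) : ℝ := a * stdGaussCDF a + stdGaussPDF a

/-- `σ̃ᵢ²(z) = σᵢ² z / (σ_W²/σᵢ² + z)`. -/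
noncomputable def sigmatildeSq (σ σW z : ℝ) : ℝ := σ ^ 2 * z / (σW ^ 2 / σ ^ 2 + z)

/-- `σ̃ᵢ(z) = √(σ̃ᵢ²(z))`. -/
noncomputable def sigmatilde (σ σW z : ℝ) : ℝ := Real.sqrt (sigmatildeSq σ σW z)

/-- `s(z₁,z₂) = √(σ̃₁²(z₁) + σ̃₂²(z₂))`. -/
noncomputable def sAlloc (σ1 σ2 σW z1 z2 : ℝ) : ℝ :=
  Real.sqrt (sigmatildeSq σ1 σW z1 + sigmatildeSq σ2 σW z2)

/-- The value of information `v(z₁,z₂) = s(z₁,z₂)·f(-c/s(z₁,z₂))` of the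
allocation `(z₁,z₂)`, with `c = |θ₁⁰ - θ₂⁰|`. -/
noncomputable def voi (σ1 σ2 σW c z1 z2 : ℝ) : ℝ :=
  sAlloc σ1 σ2 σW z1 z2 * fKG (-c / sAlloc σ1 σ2 σW z1 z2)

lemma mul_nonpos_iff_of_pos_right_aux {x y : ℝ} (h : 0 < y) : x * y ≤ 0 ↔ x ≤ 0 := by
  constructor
  · intro hh
    by_contra hx
    exact absurd (mul_pos (not_le.1 hx) h) (not_lt.2 hh)
  · intro hh
    exact mul_nonpos_of_nonpos_of_nonneg hh h.le

lemma pdf_cont : Continuous stdGaussPDF := by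
  unfold stdGaussPDF; fun_prop

lemma pdf_integrable : MeasureTheory.Integrable stdGaussPDF := by
  have h := (integrable_exp_neg_mul_sq (b := 1/2) (by norm_num)).const_mul (1 / Real.sqrt (2 * Real.pi))
  refine h.congr (Filter.Eventually.of_forall fun x => ?_)
  simp only [stdGaussPDF]
  congr 2; ring

lemma pdf_pos (x : ℝ) : 0 < stdGaussPDF x := by
  unfold stdGaussPDF
  have := Real.pi_pos
  positivity

lemma cdf_deriv (x : ℝ) : HasDerivAt stdGaussCDF (stdGaussPDF x) x := by
  have e : stdGaussCDF = fun y => stdGaussCDF 0 + ∫ t in (0:ℝ)..y, stdGaussPDF t := by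
    funext y
    have := intervalIntegral.integral_Iic_sub_Iic (f := stdGaussPDF) (μ := MeasureTheory.volume)
      (a := 0) (b := y) pdf_integrable.integrableOn pdf_integrable.integrableOn
    unfold stdGaussCDF
    linarith
  rw [e]
  exact (intervalIntegral.integral_hasDerivAt_right (pdf_cont.intervalIntegrable _ _)
    (pdf_cont.stronglyMeasurableAtFilter _ _) pdf_cont.continuousAt).const_add _

lemma pdf_deriv (x : ℝ) : HasDerivAt stdGaussPDF (-x * stdGaussPDF x) x := by
  unfold stdGaussPDF
  have h : HasDerivAt (fun y : ℝ => -y ^ 2 / 2) (-x) x := by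
    have := ((hasDerivAt_id x).pow 2).neg.div_const 2
    refine HasDerivAt.congr_deriv (this) ?_
    simp; ring
  refine HasDerivAt.congr_deriv ((h.exp.const_mul (1 / Real.sqrt (2 * Real.pi)))) ?_
  ring

lemma fKG_deriv (x : ℝ) : HasDerivAt fKG (stdGaussCDF x) x := by
  unfold fKG
  refine HasDerivAt.congr_deriv (((hasDerivAt_id x).mul (cdf_deriv x)).add (pdf_deriv x)) ?_
  simp

lemma g_deriv (c : ℝ) {s : ℝ} (hs : 0 < s) :
    HasDerivAt (fun s => s * fKG (-c / s)) (stdGaussPDF (-c / s)) s := by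
  have hd : HasDerivAt (fun s : ℝ => -c / s) (c / s ^ 2) s := by
    refine HasDerivAt.congr_deriv ((hasDerivAt_const s (-c)).div (hasDerivAt_id s) hs.ne') ?_
    simp
  have h := (hasDerivAt_id s).mul ((fKG_deriv (-c / s)).comp s hd)
  refine HasDerivAt.congr_deriv (h) ?_
  simp only [id, fKG, Function.comp]
  field_simp
  ring

lemma G_deriv (c : ℝ) {u : ℝ} (hu : 0 < u) :
    HasDerivAt (fun u => Real.sqrt u * fKG (-c / Real.sqrt u))
      (stdGaussPDF (-c / Real.sqrt u) * (1 / (2 * Real.sqrt u))) u :=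
  (g_deriv c (Real.sqrt_pos.2 hu)).comp u (Real.hasDerivAt_sqrt hu.ne')

lemma G_deriv2 (c : ℝ) {u : ℝ} (hu : 0 < u) :
    HasDerivAt (fun u => stdGaussPDF (-c / Real.sqrt u) * (1 / (2 * Real.sqrt u)))
      (stdGaussPDF (-c / Real.sqrt u) / (4 * Real.sqrt u ^ 5) * (c ^ 2 - u)) u := by
  have hs := Real.sqrt_pos.2 hu
  have hd : HasDerivAt (fun s : ℝ => -c / s) (c / Real.sqrt u ^ 2) (Real.sqrt u) := by
    refine HasDerivAt.congr_deriv ((hasDerivAt_const (Real.sqrt u) (-c)).div (hasDerivAt_id _) hs.ne') ?_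
    simp
  have hi : HasDerivAt (fun s : ℝ => 1 / (2 * s)) (-1 / (2 * Real.sqrt u ^ 2)) (Real.sqrt u) := by
    refine HasDerivAt.congr_deriv ((hasDerivAt_const (Real.sqrt u) (1:ℝ)).div ((hasDerivAt_id _).const_mul 2)
      (by simpa using hs.ne')) ?_
    try simp only [id]
    field_simp
    ring
  have h := (((pdf_deriv (-c / Real.sqrt u)).comp _ hd).mul hi).comp u (Real.hasDerivAt_sqrt hu.ne')
  refine HasDerivAt.congr_deriv (h) ?_
  have h2 : u = Real.sqrt u ^ 2 := (Real.sq_sqrt hu.le).symm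
  simp only [Function.comp]
  generalize Real.sqrt u = s at *
  subst h2
  field_simp
  ring

lemma sig_pos {σ σW z : ℝ} (h : 0 < σ) (hW : 0 < σW) (hz : 0 < z) : 0 < sigmatildeSq σ σW z := by
  unfold sigmatildeSq; positivity

lemma sig_deriv {σ σW z : ℝ} (h : 0 < σ) (hW : 0 < σW) (hz : 0 < z) :
    HasDerivAt (sigmatildeSq σ σW) (σW ^ 2 / (σW ^ 2 / σ ^ 2 + z) ^ 2) z := by
  have hp : 0 < σW ^ 2 / σ ^ 2 + z := by positivity
  unfold sigmatildeSq
  refine HasDerivAt.congr_deriv (((hasDerivAt_id z).const_mul (σ ^ 2)).div ((hasDerivAt_id z).const_add (σW ^ 2 / σ ^ 2)) hp.ne') ?_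
  simp only [id]
  field_simp
  ring


/-- The mixed second partial derivative of the value of information at
`(z₁, z₂)` with `z₁, z₂ > 0` is nonpositive if and only if
`c² ≤ σ̃₁²(z₁) + σ̃₂²(z₂)`. -/
theorem voi_mixed_partial_nonpos_iff (σ1 σ2 σW c : ℝ)
    (h1 : 0 < σ1) (h2 : 0 < σ2) (hW : 0 < σW) (hc : 0 ≤ c) :
    ∀ z1 z2 : ℝ, 0 < z1 → 0 < z2 →
      (deriv (fun b => deriv (fun a => voi σ1 σ2 σW c a b) z1) z2 ≤ 0 ↔
        c ^ 2 ≤ sigmatildeSq σ1 σW z1 + sigmatildeSq σ2 σW z2) := by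
  intro z1 z2 hz1 hz2
  have key : ∀ b, 0 < b → deriv (fun a => voi σ1 σ2 σW c a b) z1 =
      stdGaussPDF (-c / Real.sqrt (sigmatildeSq σ1 σW z1 + sigmatildeSq σ2 σW b)) *
        (1 / (2 * Real.sqrt (sigmatildeSq σ1 σW z1 + sigmatildeSq σ2 σW b))) *
        (σW ^ 2 / (σW ^ 2 / σ1 ^ 2 + z1) ^ 2) := by
    intro b hb
    have hu := add_pos (sig_pos h1 hW hz1) (sig_pos h2 hW hb)
    exact (HasDerivAt.comp z1 (h := fun a => sigmatildeSq σ1 σW a + sigmatildeSq σ2 σW b)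
      (G_deriv c hu) ((sig_deriv h1 hW hz1).add_const _)).deriv
  have hu := add_pos (sig_pos h1 hW hz1) (sig_pos h2 hW hz2)
  have hev := Filter.EventuallyEq.deriv_eq
    (Filter.eventuallyEq_of_mem (Ioi_mem_nhds hz2) key)
  have hD := (HasDerivAt.comp z2
      (h := fun b => sigmatildeSq σ1 σW z1 + sigmatildeSq σ2 σW b) (G_deriv2 c hu)
      ((sig_deriv h2 hW hz2).const_add _)).mul_const (σW ^ 2 / (σW ^ 2 / σ1 ^ 2 + z1) ^ 2)
  rw [hev]
  erw [hD.deriv]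
  have hs := Real.sqrt_pos.2 hu
  have hp := pdf_pos (-c / Real.sqrt (sigmatildeSq σ1 σW z1 + sigmatildeSq σ2 σW z2))
  generalize sigmatildeSq σ1 σW z1 + sigmatildeSq σ2 σW z2 = u at *
  have hA : 0 < σW ^ 2 / (σW ^ 2 / σ1 ^ 2 + z1) ^ 2 := by positivity
  have hB : 0 < σW ^ 2 / (σW ^ 2 / σ2 ^ 2 + z2) ^ 2 := by positivity
  have hC : 0 < stdGaussPDF (-c / Real.sqrt u) / (4 * Real.sqrt u ^ 5) := by positivity
  rw [mul_nonpos_iff_of_pos_right_aux hA, mul_nonpos_iff_of_pos_right_aux hB, mul_comm,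
    mul_nonpos_iff_of_pos_right_aux hC, sub_nonpos]
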